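/- For the function f : (ℕ → Bool) → Bool defined by f(α) = true if α = ∞ and f(α) = false otherwise, one has ε(λx. decide(f(x+1) = f(∞))) = ∞, and test(f) = false: f(ε(λx. decide(f(x+1) = f(∞)))) = f(∞) holds, yet f(0̄) ≠ f(∞). -/

import Mathlib

/-- `nbar n` is the sequence `0ⁿ1^ω`: `nbar n i = true` iff `n ≤ i`. -/
def nbar (n : ℕ) : ℕ → Bool := fun i => decide (n ≤ i)

/-- `infty` is the constant-false sequence `0^ω`. -/
def infty : ℕ → Bool := fun _ => false

/-- The shift `α + 1`: prepend `false` to `α`. -/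
def shift (α : ℕ → Bool) : ℕ → Bool :=
  fun i => match i with
  | 0 => false
  | i + 1 => α i

/-- The search functional: `eps p i = true` iff `p (nbar n) = true` for some `n ≤ i`. -/
def eps (p : (ℕ → Bool) → Bool) : ℕ → Bool :=
  fun i => decide (∃ n ≤ i, p (nbar n) = true)

/-- Kreisel's test functional. -/
def test (f : (ℕ → Bool) → Bool) : Bool :=
  decide (f (eps (fun x => decide (f (shift x) = f infty))) = f infty →
    f (nbar 0) = f infty)

theorem nbar_ne_infty (n : ℕ) : nbar n ≠ infty := fun h => by
  simpa [nbar, infty] using congrFun h n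

theorem shift_nbar (n : ℕ) : shift (nbar n) = nbar (n + 1) := by
  funext i
  cases i <;> simp [shift, nbar]

theorem eps_eq_infty {p : (ℕ → Bool) → Bool} (h : ∀ n, p (nbar n) = false) :
    eps p = infty := by
  funext i
  simp [eps, infty, h]

theorem test_eq_false_of_isolating {f : (ℕ → Bool) → Bool} (hinfty : f infty = true)
    (hnbar : ∀ n, f (nbar n) = false) :
    eps (fun x => decide (f (shift x) = f infty)) = infty ∧
    test f = false ∧
    f (eps (fun x => decide (f (shift x) = f infty))) = f infty ∧
    f (nbar 0) ≠ f infty := by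
  have heps : eps (fun x => decide (f (shift x) = f infty)) = infty :=
    eps_eq_infty fun n => by simp [shift_nbar, hnbar, hinfty]
  have hne : f (nbar 0) ≠ f infty := by simp [hnbar, hinfty]
  have hprem := congrArg f heps
  exact ⟨heps, decide_eq_false fun h => hne (h hprem), hprem, hne⟩

open Classical in
/-- For the characteristic function `f` of `{∞}`, the search yields `∞` and
`test f = false`: the premise of test holds but its conclusion fails. -/
theorem stmt_11 :
    letI f : (ℕ → Bool) → Bool := fun α => if α = infty then true else false
    eps (fun x => decide (f (shift x) = f infty)) = infty ∧
    test f = false ∧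
    f (eps (fun x => decide (f (shift x) = f infty))) = f infty ∧
    f (nbar 0) ≠ f infty := by
  exact test_eq_false_of_isolating (f := fun α => if α = infty then true else false)
    (if_pos rfl) fun n => if_neg (nbar_ne_infty n)
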